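/- arXiv:0801.0001 — 7 statements merged into one kernel-verified Lean document; each statement's English description precedes it below -/
import Mathlib

section
/- Let h ≥ 1 and let φ(x_1,…,x_h,y) = u_1x_1 + ⋯ + u_hx_h + vy be a linear form with nonzero integer coefficients u_1,…,u_h,v. Let 𝒜 = (A_1,…,A_h) be an h-tuple of nonempty finite sets of integers, let B be an infinite set of integers, and let t be a positive integer. If (𝒜,B) is t-complementing with respect to φ, then B is periodic: there exists a positive integer m such that for every integer n, n ∈ B if and only if n + m ∈ B (equivalently, B is a union of congruence classes modulo m). -/
/-- The representation function associated to the linear form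
`φ(x₁,…,x_h,y) = u₁x₁ + ⋯ + u_h x_h + v y`, the `h`-tuple `A` of finite sets of
integers, and the set `B` of integers:
`R(n) = card {(a,b) : a_i ∈ A_i, b ∈ B, u₁a₁ + ⋯ + u_h a_h + v b = n}`. -/
noncomputable def repFn {h : ℕ} (u : Fin h → ℤ) (v : ℤ) (A : Fin h → Finset ℤ)
    (B : Set ℤ) (n : ℤ) : ℕ∞ :=
  {p : (Fin h → ℤ) × ℤ |
    (∀ i, p.1 i ∈ A i) ∧ p.2 ∈ B ∧ (∑ i, u i * p.1 i) + v * p.2 = n}.encard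

open Classical in
/-- If the counts agree and all terms but those at `y` are known to be periodic, so is `y`. -/
lemma periodic_step {ι : Type*} (P : Finset ι) (f : ι → ℤ) (C : Set ℤ) (t : ℕ)
    (hc : ∀ n : ℤ, (P.filter (fun a => n - f a ∈ C)).card = t) (M n y : ℤ)
    (hQ : ∀ a ∈ P, n - f a = y ∨ (n - f a ∈ C ↔ n - f a + M ∈ C))
    (a0 : ι) (ha0 : a0 ∈ P) (h0 : n - f a0 = y) : (y ∈ C ↔ y + M ∈ C) := by
  have h1 := hc n
  have h2 := hc (n + M)
  have e : ∀ a, n + M - f a = n - f a + M := fun a => by ring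
  simp only [e] at h2
  by_contra hne
  by_cases hy : y ∈ C
  · have hy' : y + M ∉ C := fun h => hne ⟨fun _ => h, fun _ => hy⟩
    have : (P.filter (fun a => n - f a + M ∈ C)) ⊂ (P.filter (fun a => n - f a ∈ C)) := by
      rw [Finset.ssubset_iff_of_subset]
      · exact ⟨a0, by simp [ha0, h0, hy], by simp [h0, hy']⟩
      · intro a ha
        simp only [Finset.mem_filter] at ha ⊢
        refine ⟨ha.1, ?_⟩
        rcases hQ a ha.1 with h | h
        · rw [h]; exact hy
        · exact h.2 ha.2
    have := Finset.card_lt_card this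
    omega
  · have hy' : y + M ∈ C := by
      by_contra h
      exact hne ⟨fun h' => absurd h' hy, fun h' => absurd h' h⟩
    have : (P.filter (fun a => n - f a ∈ C)) ⊂ (P.filter (fun a => n - f a + M ∈ C)) := by
      rw [Finset.ssubset_iff_of_subset]
      · exact ⟨a0, by simp [ha0, h0, hy'], by simp [h0, hy]⟩
      · intro a ha
        simp only [Finset.mem_filter] at ha ⊢
        refine ⟨ha.1, ?_⟩
        rcases hQ a ha.1 with h | h
        · rw [h]; exact hy'
        · exact h.1 ha.2
    have := Finset.card_lt_card this
    omega

open Classical in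
lemma periodic_of_count {ι : Type*} (P : Finset ι) (hP : P.Nonempty) (f : ι → ℤ) (C : Set ℤ)
    (t : ℕ) (hc : ∀ n : ℤ, (P.filter (fun a => n - f a ∈ C)).card = t) :
    ∃ M : ℕ, 0 < M ∧ ∀ n : ℤ, n ∈ C ↔ n + M ∈ C := by
  obtain ⟨a0, ha0, hmin⟩ := P.exists_min_image f hP
  obtain ⟨a1, ha1, hmax⟩ := P.exists_max_image f hP
  obtain ⟨L, hL⟩ := Int.eq_ofNat_of_zero_le (sub_nonneg.2 (hmin a1 ha1))
  obtain ⟨p', q', hne, hpq'⟩ := Finite.exists_ne_map_eq_of_infinite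
    (fun (n : ℤ) (i : Fin L) => (n + (i : ℕ) ∈ C : Prop))
  obtain ⟨p, q, hlt, hpq⟩ : ∃ p q : ℤ, p < q ∧
      ∀ i : ℕ, i < L → (p + i ∈ C ↔ q + i ∈ C) := by
    rcases lt_or_gt_of_ne hne with h | h
    · exact ⟨p', q', h, fun i hi => iff_of_eq (congrFun hpq' ⟨i, hi⟩)⟩
    · exact ⟨q', p', h, fun i hi => (iff_of_eq (congrFun hpq' ⟨i, hi⟩)).symm⟩
  obtain ⟨M, hM⟩ := Int.eq_ofNat_of_zero_le (sub_nonneg.2 hlt.le)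
  refine ⟨M, by omega, ?_⟩
  have key : ∀ k : ℕ, ∀ x : ℤ, p - k ≤ x → x < p + L + k → (x ∈ C ↔ x + M ∈ C) := by
    intro k
    induction k with
    | zero =>
      intro x h1 h2
      have := hpq (x - p).toNat (by omega)
      rw [show p + ((x - p).toNat : ℤ) = x by omega,
        show q + ((x - p).toNat : ℤ) = x + M by omega] at this
      exact this
    | succ k ih =>
      intro x h1 h2
      push_cast at h1 h2
      by_cases hlo : x < p - k
      · refine periodic_step P f C t hc M (x + f a1) x ?_ a1 ha1 (by ring)
        intro a ha
        have := hmin a ha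
        have := hmax a ha
        by_cases hE : x + f a1 - f a = x
        · exact Or.inl hE
        · exact Or.inr (ih _ (by omega) (by omega))
      · by_cases hhi : p + L + k ≤ x
        · refine periodic_step P f C t hc M (x + f a0) x ?_ a0 ha0 (by ring)
          intro a ha
          have := hmin a ha
          have := hmax a ha
          by_cases hE : x + f a0 - f a = x
          · exact Or.inl hE
          · exact Or.inr (ih _ (by omega) (by omega))
        · exact ih x (by omega) (by omega)
  intro n
  exact key ((n - p).natAbs + 1) n (by omega) (by omega)

theorem stmt0 {h : ℕ} (hh : 1 ≤ h) (u : Fin h → ℤ) (v : ℤ)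
    (hu : ∀ i, u i ≠ 0) (hv : v ≠ 0)
    (A : Fin h → Finset ℤ) (hA : ∀ i, (A i).Nonempty)
    (B : Set ℤ) (hB : B.Infinite) (t : ℕ) (ht : 0 < t)
    (hcomp : ∀ n : ℤ, repFn u v A B n = t) :
    ∃ m : ℕ, 0 < m ∧ ∀ n : ℤ, n ∈ B ↔ n + m ∈ B := by
  classical
  let C : Set ℤ := {x | ∃ b ∈ B, v * b = x}
  have hC : ∀ b, v * b ∈ C ↔ b ∈ B := by
    intro b
    constructor
    · rintro ⟨b', hb', e⟩
      rwa [← mul_left_cancel₀ hv e]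
    · intro hb
      exact ⟨b, hb, rfl⟩
  obtain ⟨M, hM, hper⟩ := periodic_of_count (Fintype.piFinset A)
    (Fintype.piFinset_nonempty.2 hA) (fun a => ∑ i, u i * a i) C t (by
      intro n
      have h1 := hcomp n
      unfold repFn at h1
      rw [← Set.InjOn.encard_image (f := Prod.fst)] at h1
      · have e : ((Fintype.piFinset A).filter (fun a => n - ∑ i, u i * a i ∈ C) :
            Set (Fin h → ℤ)) = Prod.fst '' {p : (Fin h → ℤ) × ℤ |
            (∀ i, p.1 i ∈ A i) ∧ p.2 ∈ B ∧ (∑ i, u i * p.1 i) + v * p.2 = n} := by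
          ext a
          simp only [Finset.coe_filter, Fintype.mem_piFinset, Set.mem_setOf_eq, Set.mem_image]
          constructor
          · rintro ⟨ha, b, hb, e⟩
            exact ⟨(a, b), ⟨ha, hb, by simp only [e]; ring⟩, rfl⟩
          · rintro ⟨⟨a', b⟩, ⟨ha, hb, e⟩, rfl⟩
            exact ⟨ha, b, hb, by simp only at e ⊢; linarith⟩
        rw [← e, Set.encard_coe_eq_coe_finsetCard] at h1
        exact_mod_cast h1
      · rintro ⟨a, b⟩ ⟨_, _, e⟩ ⟨a', b'⟩ ⟨_, _, e'⟩ (rfl : a = a')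
        simp only at e e'
        have : v * b = v * b' := by linarith
        rw [mul_left_cancel₀ hv this])
  refine ⟨M, hM, ?_⟩
  have hnat : ∀ k : ℕ, ∀ x : ℤ, x ∈ C ↔ x + k * M ∈ C := by
    intro k
    induction k with
    | zero => intro x; simp
    | succ k ih =>
      intro x
      rw [ih x, hper]
      push_cast
      rw [show x + k * M + M = x + ((k : ℤ) + 1) * M by ring]
  intro n
  rw [← hC, ← hC]
  rcases Int.natAbs_eq v with hvv | hvv
  · rw [hnat v.natAbs (v * n), ← hvv, mul_add]
  · rw [hnat v.natAbs (v * (n + M)),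
      show v * (n + M) + (v.natAbs : ℤ) * M = v * n by
        rw [show (v.natAbs : ℤ) = -v by omega]; ring]
end

section
/- Let h ≥ 1 and let φ(x_1,…,x_h,y) = u_1x_1 + ⋯ + u_hx_h + vy be a linear form with nonzero integer coefficients u_1,…,u_h,v, and set ψ(x_1,…,x_h) = u_1x_1 + ⋯ + u_hx_h. Let 𝒜 = (A_1,…,A_h) be an h-tuple of nonempty finite sets of integers with |A_i| > 1 for at least one i, let B be an infinite set of integers, and let t be a positive integer. Set g_min = min(ψ(𝒜)), g_max = max(ψ(𝒜)), and d = ⌊(g_max − g_min)/|v|⌋. If (𝒜,B) is t-complementing with respect to φ, then B is periodic with a period m satisfying 1 ≤ m ≤ 2^d; that is, there exists a positive integer m ≤ 2^d such that for every integer n, n ∈ B if and only if n + m ∈ B. -/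
lemma period_aux {α : Type*} [Fintype α] (s : ℤ → α)
    (hs : ∀ k l, s k = s l → s (k + 1) = s (l + 1)) :
    ∃ m : ℕ, 1 ≤ m ∧ m ≤ Fintype.card α ∧ ∀ k, s (k + m) = s k := by
  by_contra hcon
  push Not at hcon
  have hex : ∀ m : ℕ, ∃ k : ℤ, 1 ≤ m → m ≤ Fintype.card α → s (k + m) ≠ s k := by
    intro m
    by_cases h1 : 1 ≤ m
    · by_cases h2 : m ≤ Fintype.card α
      · obtain ⟨k, hk⟩ := hcon m h1 h2
        exact ⟨k, fun _ _ => hk⟩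
      · exact ⟨0, fun _ h => absurd h h2⟩
    · exact ⟨0, fun h => absurd h h1⟩
  choose f hf using hex
  obtain ⟨K, hK⟩ : ∃ K : ℤ, ∀ m ∈ Finset.range (Fintype.card α + 1), K ≤ f m := by
    obtain ⟨K, hK⟩ := ((Finset.range (Fintype.card α + 1)).image f).bddBelow
    exact ⟨K, fun m hm => hK (by
      simp only [Finset.coe_image, Set.mem_image, Finset.mem_coe]
      exact ⟨m, hm, rfl⟩)⟩
  have step : ∀ (k l : ℤ) (n : ℕ), s k = s l → s (k + n) = s (l + n) := by
    intro k l n h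
    induction n with
    | zero => simpa using h
    | succ n ih =>
      have := hs _ _ ih
      push_cast
      rw [← add_assoc, ← add_assoc]
      exact this
  obtain ⟨i, j, hij, heq⟩ := Fintype.exists_ne_map_eq_of_card_lt
    (fun i : Fin (Fintype.card α + 1) => s (K - Fintype.card α + (i : ℕ))) (by simp)
  wlog hlt : i < j generalizing i j
  · exact this j i hij.symm heq.symm (lt_of_le_of_ne (not_lt.mp hlt) hij.symm)
  have hlt' : (i : ℕ) < j := hlt
  have hj := j.2
  have hm := hf (j - i : ℕ) (by omega) (by omega)
  have hK' := hK (j - i : ℕ) (by simp; omega)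
  apply hm
  have := step _ _ (f (j - i : ℕ) - (K - Fintype.card α + (i : ℕ))).toNat heq
  rw [Int.toNat_of_nonneg (by omega)] at this
  rw [Nat.cast_sub hlt'.le]
  convert this.symm using 2 <;> ring

theorem stmt1 {h : ℕ} (hh : 1 ≤ h) (u : Fin h → ℤ) (v : ℤ)
    (hu : ∀ i, u i ≠ 0) (hv : v ≠ 0)
    (A : Fin h → Finset ℤ) (hA : ∀ i, (A i).Nonempty) (hA1 : ∃ i, 1 < (A i).card)
    (B : Set ℤ) (hB : B.Infinite) (t : ℕ) (ht : 0 < t)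
    (S : Finset ℤ) (hS : S = (Fintype.piFinset A).image fun a => ∑ i, u i * a i)
    (hne : S.Nonempty)
    (gmin gmax : ℤ) (hgmin : gmin = S.min' hne) (hgmax : gmax = S.max' hne)
    (d : ℕ) (hd : d = ((gmax - gmin) / |v|).toNat)
    (hcomp : ∀ n : ℤ, repFn u v A B n = t) :
    ∃ m : ℕ, 1 ≤ m ∧ m ≤ 2 ^ d ∧ ∀ n : ℤ, n ∈ B ↔ n + m ∈ B := by
  have hmem : ∀ a : Fin h → ℤ, (∀ i, a i ∈ A i) → ∑ i, u i * a i ∈ S := by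
    intro a ha
    rw [hS]
    exact Finset.mem_image.mpr ⟨a, Fintype.mem_piFinset.mpr ha, rfl⟩
  have hlo : ∀ g ∈ S, gmin ≤ g := fun g hg => hgmin ▸ S.min'_le g hg
  have hhi : ∀ g ∈ S, g ≤ gmax := fun g hg => hgmax ▸ S.le_max' g hg
  have hminS : gmin ∈ S := hgmin ▸ S.min'_mem hne
  have hmaxS : gmax ∈ S := hgmax ▸ S.max'_mem hne
  have hd' : (d : ℤ) = (gmax - gmin) / |v| := by
    rw [hd, Int.toNat_of_nonneg]
    exact Int.ediv_nonneg (by linarith [hlo _ hmaxS]) (abs_nonneg v)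
  obtain ⟨g0, hg0, hrange⟩ : ∃ g0 ∈ S, ∀ g ∈ S, ∀ x : ℤ, g - g0 = v * x →
      0 ≤ x ∧ x ≤ d := by
    rcases lt_or_gt_of_ne hv with hneg | hpos
    · refine ⟨gmax, hmaxS, fun g hg x hx => ?_⟩
      have h1 := hlo g hg
      have h2 := hhi g hg
      constructor
      · by_contra hc
        nlinarith
      · rw [hd', Int.le_ediv_iff_mul_le (abs_pos.mpr hv), abs_of_neg hneg]
        nlinarith
    · refine ⟨gmin, hminS, fun g hg x hx => ?_⟩
      have h1 := hlo g hg
      have h2 := hhi g hg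
      constructor
      · by_contra hc
        nlinarith
      · rw [hd', Int.le_ediv_iff_mul_le (abs_pos.mpr hv), abs_of_pos hpos]
        nlinarith
  obtain ⟨a0, ha0, hsum0⟩ : ∃ a0 : Fin h → ℤ, (∀ i, a0 i ∈ A i) ∧ ∑ i, u i * a0 i = g0 := by
    rw [hS] at hg0
    obtain ⟨a, ha, hag⟩ := Finset.mem_image.mp hg0
    exact ⟨a, Fintype.mem_piFinset.mp ha, hag⟩
  have key : ∀ k l : ℤ, (∀ i : Fin d, (k - 1 - (i : ℕ) ∈ B ↔ l - 1 - (i : ℕ) ∈ B)) →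
      k ∈ B → l ∈ B := by
    intro k l hw hk
    by_contra hl
    have hPk := hcomp (g0 + v * k)
    have hPl := hcomp (g0 + v * l)
    unfold repFn at hPk hPl
    set Pk := {p : (Fin h → ℤ) × ℤ |
      (∀ i, p.1 i ∈ A i) ∧ p.2 ∈ B ∧ (∑ i, u i * p.1 i) + v * p.2 = g0 + v * k} with hPkdef
    set Pl := {p : (Fin h → ℤ) × ℤ |
      (∀ i, p.1 i ∈ A i) ∧ p.2 ∈ B ∧ (∑ i, u i * p.1 i) + v * p.2 = g0 + v * l} with hPldef
    let f : (Fin h → ℤ) × ℤ → (Fin h → ℤ) × ℤ := fun p => (p.1, p.2 + (k - l))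
    have hf : Function.Injective f := by
      rintro ⟨a, b⟩ ⟨a', b'⟩ hab
      simpa [f] using hab
    have hnot : (a0, k) ∉ f '' Pl := by
      rintro ⟨⟨a, b⟩, ⟨-, hb, -⟩, hab⟩
      simp only [f, Prod.mk.injEq] at hab
      have : b = l := by linarith [hab.2]
      exact hl (this ▸ hb)
    have hsub : insert (a0, k) (f '' Pl) ⊆ Pk := by
      intro p hp
      rcases hp with rfl | ⟨⟨a, b⟩, ⟨ha, hb, hab⟩, rfl⟩
      · exact ⟨ha0, hk, by simp only [hsum0]⟩
      · simp only at ha hb hab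
        obtain ⟨hx0, hxd⟩ := hrange _ (hmem a ha) (l - b) (by linarith)
        have hne' : l - b ≠ 0 := by
          intro h0
          exact hl ((by linarith : b = l) ▸ hb)
        refine ⟨ha, ?_, ?_⟩
        · have := hw ⟨(l - b - 1).toNat, by omega⟩
          simp only at this
          rw [Int.toNat_of_nonneg (by omega)] at this
          have e1 : k - 1 - (l - b - 1) = b + (k - l) := by ring
          have e2 : l - 1 - (l - b - 1) = b := by ring
          rw [e1, e2] at this
          exact this.mpr hb
        · simp only [f]
          linarith
    have hle := Set.encard_le_encard hsub
    rw [Set.encard_insert_of_notMem hnot, hf.encard_image, hPk, hPl] at hle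
    have : t + 1 ≤ t := by exact_mod_cast hle
    omega
  have key' : ∀ k l : ℤ, (∀ i : Fin d, (k - 1 - (i : ℕ) ∈ B ↔ l - 1 - (i : ℕ) ∈ B)) →
      (k ∈ B ↔ l ∈ B) := fun k l hw =>
    ⟨key k l hw, key l k fun i => (hw i).symm⟩
  obtain ⟨m, hm1, hm2, hm⟩ := period_aux
    (fun k : ℤ => (fun i : Fin d => (k - 1 - (i : ℕ) ∈ B : Prop))) (by
      intro k l hkl
      have hw : ∀ i : Fin d, (k - 1 - (i : ℕ) ∈ B ↔ l - 1 - (i : ℕ) ∈ B) :=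
        fun i => iff_of_eq (congrFun hkl i)
      funext ⟨i, hi⟩
      apply propext
      rcases i with _ | i
      · simpa using key' k l hw
      · have := hw ⟨i, by omega⟩
        have e : ∀ k : ℤ, k + 1 - 1 - ((i + 1 : ℕ) : ℤ) = k - 1 - (i : ℕ) := by
          intro k; push_cast; ring
        simp only [e]
        exact this)
  refine ⟨m, hm1, by simpa using hm2, fun n => ?_⟩
  exact (key' (n + m) n fun i => iff_of_eq (congrFun (hm n) i)).symm
end

section
/- Let h ≥ 1 and let ψ(x_1,…,x_h) = u_1x_1 + ⋯ + u_hx_h be a linear form with nonzero integer coefficients u_1,…,u_h. Let 𝒜 = (A_1,…,A_h) be an h-tuple of nonempty finite sets of integers, let m be a positive integer, and let t be a positive integer. For each i, let F_{A_i}(z) = Σ_{a ∈ A_i} z^a (a Laurent polynomial with integer coefficients), and let Λ_m(z) = 1 + z + z² + ⋯ + z^{m−1}. Then 𝒜 is t-complementing modulo m with respect to ψ if and only if there exists a nonnegative integer L such that z^L · F_{A_1}(z^{u_1}) ⋯ F_{A_h}(z^{u_h}) is a polynomial and z^L · F_{A_1}(z^{u_1}) ⋯ F_{A_h}(z^{u_h})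 ≡ t·Λ_m(z) (mod z^m − 1) in ℤ[z]. -/
open LaurentPolynomial Polynomial

/-- Reduction of exponents modulo `m`. -/
noncomputable def redHom (m : ℕ) : ℤ[T;T⁻¹] →+* AddMonoidAlgebra ℤ (ZMod m) :=
  AddMonoidAlgebra.mapDomainRingHom ℤ (Int.castAddHom (ZMod m))

lemma redHom_T (m : ℕ) (n : ℤ) : redHom m (T n) = AddMonoidAlgebra.single (n : ZMod m) 1 := by
  exact AddMonoidAlgebra.mapDomain_single

lemma redHom_T_coeff (m : ℕ) (n : ℤ) (r : ZMod m) :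
    (redHom m (T n)).coeff r = if (n : ZMod m) = r then 1 else 0 := by
  rw [redHom_T, AddMonoidAlgebra.coeff_single, Finsupp.single_apply]

lemma natCast_inj_lt {m i j : ℕ} (hi : i < m) (hj : j < m) :
    ((i : ZMod m) = (j : ZMod m)) ↔ i = j := by
  rw [ZMod.natCast_eq_natCast_iff', Nat.mod_eq_of_lt hi, Nat.mod_eq_of_lt hj]

lemma redHom_eq_zero_iff (m : ℕ) (hm : 0 < m) (Q : ℤ[X]) :
    redHom m (toLaurent Q) = 0 ↔ (X ^ m - 1 : ℤ[X]) ∣ Q := by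
  have h1 : redHom m (toLaurent (X ^ m - 1 : ℤ[X])) = 0 := by
    rw [map_sub, map_sub, Polynomial.toLaurent_X_pow, redHom_T, map_one, map_one]
    simp [AddMonoidAlgebra.one_def]
  have hmon : (X ^ m - 1 : ℤ[X]).Monic := by
    simpa using monic_X_pow_sub_C (1 : ℤ) hm.ne'
  have hdeg : (X ^ m - 1 : ℤ[X]).degree = m := by
    simpa using degree_X_pow_sub_C hm (1 : ℤ)
  constructor
  · intro hQ
    rw [← modByMonic_eq_zero_iff_dvd hmon]
    set R := Q %ₘ (X ^ m - 1) with hR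
    have hRdeg : R.degree < m := hdeg ▸ degree_modByMonic_lt Q hmon
    have hR0 : redHom m (toLaurent R) = 0 := by
      have := modByMonic_add_div Q (X ^ m - 1 : ℤ[X])
      rw [← this, map_add, map_add, map_mul, map_mul, h1, zero_mul, add_zero] at hQ
      exact hQ
    ext k
    by_cases hk : k < m
    · have hRs : R = ∑ i ∈ Finset.range m, R.coeff i • (X : ℤ[X]) ^ i := by
        by_cases h0 : R = 0
        · simp [h0]
        conv_lhs => rw [R.as_sum_range' m ((natDegree_lt_iff_degree_lt h0).2 hRdeg)]
        exact Finset.sum_congr rfl fun i _ => by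
          rw [smul_X_eq_monomial]
      have h2 := congrArg (fun f => f.coeff (k : ZMod m)) hR0
      rw [hRs] at h2
      simp only [map_sum, map_zsmul, Polynomial.toLaurent_X_pow, AddMonoidAlgebra.coeff_sum,
        Finsupp.finsetSum_apply, AddMonoidAlgebra.coeff_smul, Finsupp.smul_apply,
        redHom_T_coeff, Int.cast_natCast, AddMonoidAlgebra.coeff_zero, Finsupp.coe_zero,
        Pi.zero_apply] at h2
      rw [Finset.sum_eq_single k] at h2
      · simpa using h2
      · intro b hb hbk
        rw [if_neg, smul_zero]
        rwa [natCast_inj_lt (Finset.mem_range.1 hb) hk]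
      · intro hk'
        exact absurd (Finset.mem_range.2 hk) hk'
    · rw [coeff_zero]
      exact coeff_eq_zero_of_degree_lt (hRdeg.trans_le (by exact_mod_cast not_lt.1 hk))
  · rintro ⟨S, rfl⟩
    rw [map_mul, map_mul, h1, zero_mul]

lemma key {h : ℕ} (u : Fin h → ℤ) (A : Fin h → Finset ℤ)
    (m : ℕ) (hm : 0 < m) (t : ℕ) (L : ℕ) (P : ℤ[X])
    (hP : toLaurent P = T (L : ℤ) * ∏ i, ∑ a ∈ A i, T (u i * a)) :
    (∀ ℓ ∈ Finset.range m,
        ((Fintype.piFinset A).filter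
          (fun a => (∑ i, u i * a i) % (m : ℤ) = (ℓ : ℤ))).card = t) ↔
      (X ^ m - 1 : ℤ[X]) ∣ P - (t : ℤ) • ∑ j ∈ Finset.range m, (X : ℤ[X]) ^ j := by
  haveI : NeZero m := ⟨hm.ne'⟩
  have hT : ∀ (s : Finset (Fin h)) (f : Fin h → ℤ),
      ∏ i ∈ s, (T (f i) : ℤ[T;T⁻¹]) = T (∑ i ∈ s, f i) := by
    intro s f
    induction s using Finset.induction_on with
    | empty => simp
    | insert a s ha ih => rw [Finset.prod_insert ha, Finset.sum_insert ha, ih, T_add]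
  have hprod : toLaurent P = ∑ a ∈ Fintype.piFinset A, T ((L : ℤ) + ∑ i, u i * a i) := by
    rw [hP, Finset.prod_univ_sum, Finset.mul_sum]
    exact Finset.sum_congr rfl fun a _ => by rw [hT, T_add]
  have hΛ : ∀ r : ZMod m, ∑ j ∈ Finset.range m, (if (j : ZMod m) = r then (1 : ℤ) else 0) = 1 := by
    intro r
    rw [Finset.sum_eq_single r.val]
    · simp
    · intro b hb hbk
      rw [if_neg]
      rintro rfl
      exact hbk (by rw [ZMod.val_natCast, Nat.mod_eq_of_lt (Finset.mem_range.1 hb)])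
    · intro h'
      exact absurd (Finset.mem_range.2 (ZMod.val_lt r)) h'
  have hcoeff : ∀ r : ZMod m, (redHom m (toLaurent
      (P - (t : ℤ) • ∑ j ∈ Finset.range m, (X : ℤ[X]) ^ j))).coeff r =
      (((Fintype.piFinset A).filter
        (fun a => (((∑ i, u i * a i : ℤ) : ZMod m) = r - L))).card : ℤ) - t := by
    intro r
    rw [map_sub, map_sub, hprod]
    simp only [map_sum, map_zsmul, Polynomial.toLaurent_X_pow, AddMonoidAlgebra.coeff_sum,
        Finsupp.finsetSum_apply, AddMonoidAlgebra.coeff_smul, Finsupp.smul_apply,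
        AddMonoidAlgebra.coeff_sub, Finsupp.sub_apply,
        redHom_T_coeff, Int.cast_natCast]
    rw [hΛ, Finset.card_filter]
    push_cast
    simp only [eq_sub_iff_add_eq', smul_eq_mul, mul_one]
  have hmod : ∀ (s : ℤ) (ℓ : ℕ), ℓ < m → (s % (m : ℤ) = (ℓ : ℤ) ↔ (s : ZMod m) = (ℓ : ZMod m)) := by
    intro s ℓ hℓ
    rw [← Int.cast_natCast (R := ZMod m) ℓ, ZMod.intCast_eq_intCast_iff',
      Int.emod_eq_of_lt (a := (ℓ : ℤ)) (by positivity) (by exact_mod_cast hℓ)]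
  rw [← redHom_eq_zero_iff m hm]
  constructor
  · intro H
    ext r
    rw [hcoeff]
    have := H (r - L).val (Finset.mem_range.2 (ZMod.val_lt _))
    simp only [hmod _ _ (ZMod.val_lt (r - (L : ZMod m)))] at this
    rw [ZMod.natCast_zmod_val] at this
    rw [this, sub_self]
    rfl
  · intro H ℓ hℓ
    have := hcoeff ((ℓ : ZMod m) + L)
    rw [H, add_sub_cancel_right] at this
    simp only [hmod _ _ (Finset.mem_range.1 hℓ)]
    simp only [AddMonoidAlgebra.coeff_zero, Finsupp.coe_zero, Pi.zero_apply] at this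
    omega

theorem stmt2 {h : ℕ} (hh : 1 ≤ h) (u : Fin h → ℤ) (hu : ∀ i, u i ≠ 0)
    (A : Fin h → Finset ℤ) (hA : ∀ i, (A i).Nonempty)
    (m : ℕ) (hm : 0 < m) (t : ℕ) (ht : 0 < t) :
    (∀ ℓ ∈ Finset.range m,
        ((Fintype.piFinset A).filter
          (fun a => (∑ i, u i * a i) % (m : ℤ) = (ℓ : ℤ))).card = t) ↔
      ∃ (L : ℕ) (P : Polynomial ℤ),
        Polynomial.toLaurent P =
          LaurentPolynomial.T (L : ℤ) *
            ∏ i, ∑ a ∈ A i, LaurentPolynomial.T (u i * a) ∧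
        (X ^ m - 1 : Polynomial ℤ) ∣
          P - (t : ℤ) • ∑ j ∈ Finset.range m, (X : Polynomial ℤ) ^ j := by
  obtain ⟨L, P, hP⟩ := LaurentPolynomial.exists_T_pow
    (∏ i, ∑ a ∈ A i, (LaurentPolynomial.T (u i * a) : ℤ[T;T⁻¹]))
  rw [← LaurentPolynomial.T_mul] at hP
  constructor
  · intro H
    exact ⟨L, P, hP, (key u A m hm t L P hP).1 H⟩
  · rintro ⟨L', P', hP', hd⟩
    exact (key u A m hm t L' P' hP').2 hd
end

section
/- Let h ≥ 1 and let φ(x_1,…,x_h,y) = u_1x_1 + ⋯ + u_hx_h + vy be a linear form with nonzero integer coefficients u_1,…,u_h,v. Let 𝒜 = (A_1,…,A_h) be an h-tuple of nonempty finite sets of integers, and let f : ℤ → ℕ₀ ∪ {∞} be a function. Suppose there is a strictly increasing sequence {L_N}_{N=1}^∞ of positive integers with the property that, for every N ≥ 1, there exists a set B_N of integers satisfying R^(φ)_{𝒜,B_N}(n) = f(n) for all integers n with |n| ≤ L_N. Then there exists a set B of integers such that R^(φ)_{𝒜,B}(n) = f(n) for all integers n. -/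
theorem stmt3 {h : ℕ} (hh : 1 ≤ h) (u : Fin h → ℤ) (v : ℤ)
    (hu : ∀ i, u i ≠ 0) (hv : v ≠ 0)
    (A : Fin h → Finset ℤ) (hA : ∀ i, (A i).Nonempty)
    (f : ℤ → ℕ∞) (L : ℕ → ℕ) (hL : StrictMono L) (hLpos : ∀ N, 0 < L N)
    (hBN : ∀ N : ℕ, 1 ≤ N → ∃ B : Set ℤ, ∀ n : ℤ, |n| ≤ (L N : ℤ) →
      repFn u v A B n = f n) :
    ∃ B : Set ℤ, ∀ n : ℤ, repFn u v A B n = f n := by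
  choose! S hS using hBN
  -- take the limit of the sets `S N` along a nonprincipal ultrafilter
  let U : Ultrafilter ℕ := Filter.hyperfilter ℕ
  have hU : (U : Filter ℕ) ≤ Filter.atTop := by
    rw [← Nat.cofinite_eq_atTop]
    exact Filter.hyperfilter_le_cofinite
  refine ⟨{b | ∀ᶠ N in (U : Filter ℕ), b ∈ S N}, fun n => ?_⟩
  have hfin : {p : (Fin h → ℤ) × ℤ | (∀ i, p.1 i ∈ A i) ∧
      (∑ i, u i * p.1 i) + v * p.2 = n}.Finite := by
    refine Set.Finite.of_injOn (f := Prod.fst) (t := (Fintype.piFinset A : Set (Fin h → ℤ)))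
      ?_ ?_ (Finset.finite_toSet _)
    · intro p hp
      simpa using hp.1
    · rintro ⟨a, b⟩ hp ⟨c, d⟩ hq hac
      obtain rfl : a = c := hac
      have h1 := hp.2
      have h2 := hq.2
      simp only at h1 h2
      have : v * b = v * d := by linarith
      rw [mul_left_cancel₀ hv this]
  have hev : ∀ᶠ N in (U : Filter ℕ), ∀ p ∈ {p : (Fin h → ℤ) × ℤ | (∀ i, p.1 i ∈ A i) ∧
      (∑ i, u i * p.1 i) + v * p.2 = n},
      ((∀ᶠ M in (U : Filter ℕ), p.2 ∈ S M) ↔ p.2 ∈ S N) := by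
    rw [Filter.eventually_all_finite hfin]
    intro p _
    by_cases hp : ∀ᶠ M in (U : Filter ℕ), p.2 ∈ S M
    · filter_upwards [hp] with N hN
      exact ⟨fun _ => hN, fun _ => hp⟩
    · filter_upwards [Ultrafilter.eventually_not.2 hp] with N hN
      exact ⟨fun h' => absurd h' hp, fun h' => absurd h' hN⟩
  have hlarge : ∀ᶠ N in (U : Filter ℕ), 1 ≤ N ∧ n.natAbs ≤ N :=
    hU ((Filter.eventually_ge_atTop 1).and (Filter.eventually_ge_atTop _))
  obtain ⟨N, hN, h1, h2⟩ := (hev.and hlarge).exists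
  have h3 : N ≤ L N := hL.le_apply
  rw [← hS N h1 n (by rw [Int.abs_eq_natAbs]; omega)]
  unfold repFn
  congr 1
  ext p
  constructor
  · rintro ⟨ha, hb, hc⟩
    exact ⟨ha, (hN p ⟨ha, hc⟩).1 hb, hc⟩
  · rintro ⟨ha, hb, hc⟩
    exact ⟨ha, (hN p ⟨ha, hc⟩).2 hb, hc⟩
end

section
/- Let h ≥ 1 and let φ(x_1,…,x_h,y) = u_1x_1 + ⋯ + u_hx_h + y be a linear form with nonzero integer coefficients u_1,…,u_h and coefficient 1 on y. Let 𝒜 = (A_1,…,A_h) be an h-tuple of nonempty finite sets of integers and let t ≥ 1 be an integer. Suppose there is a strictly increasing sequence {L_N}_{N=1}^∞ of positive integers such that, for every N ≥ 1, there exist a set B_N of integers and a set I_N consisting of 2L_N + 1 consecutive integers with R^(φ)_{𝒜,B_N}(n) = t for all n ∈ I_N. Then there exists a set B of integers such that R^(φ)_{𝒜,B}(n) = t for all integers n. -/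
theorem repFn_one_eq {h : ℕ} (u : Fin h → ℤ) (A : Fin h → Finset ℤ) (B : Set ℤ) (n : ℤ) :
    repFn u 1 A B n =
      {a : Fin h → ℤ | (∀ i, a i ∈ A i) ∧ n - ∑ i, u i * a i ∈ B}.encard := by
  have hinj : Function.Injective
      (fun a : Fin h → ℤ => ((a, n - ∑ i, u i * a i) : (Fin h → ℤ) × ℤ)) := by
    intro a b hab
    exact congrArg Prod.fst hab
  rw [← hinj.encard_image]
  unfold repFn
  congr 1
  ext ⟨a, b⟩
  simp only [Set.mem_setOf_eq, Set.mem_image, Prod.mk.injEq]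
  constructor
  · rintro ⟨h1, h2, h3⟩
    have hb : n - ∑ i, u i * a i = b := by linarith
    exact ⟨a, ⟨h1, hb ▸ h2⟩, rfl, hb⟩
  · rintro ⟨a', ⟨h1, h2⟩, rfl, rfl⟩
    exact ⟨h1, h2, by ring⟩

theorem stmt4 {h : ℕ} (hh : 1 ≤ h) (u : Fin h → ℤ) (hu : ∀ i, u i ≠ 0)
    (A : Fin h → Finset ℤ) (hA : ∀ i, (A i).Nonempty)
    (t : ℕ) (ht : 1 ≤ t)
    (L : ℕ → ℕ) (hL : StrictMono L) (hLpos : ∀ N, 0 < L N)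
    (hBN : ∀ N : ℕ, 1 ≤ N → ∃ (B : Set ℤ) (c : ℤ), ∀ n : ℤ,
      |n - c| ≤ (L N : ℤ) → repFn u 1 A B n = t) :
    ∃ B : Set ℤ, ∀ n : ℤ, repFn u 1 A B n = t := by
  have hBN' : ∀ N : ℕ, ∃ (B : Set ℤ) (c : ℤ), ∀ n : ℤ,
      |n - c| ≤ (L (N + 1) : ℤ) → repFn u 1 A B n = t := fun N => hBN (N + 1) (by omega)
  choose C c hC using hBN'
  let U : Ultrafilter ℕ := Filter.hyperfilter ℕ
  refine ⟨{b | ∀ᶠ N in (U : Filter ℕ), b + c N ∈ C N}, fun n => ?_⟩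
  have h1 : ∀ b : ℤ, ∀ᶠ N in (U : Filter ℕ),
      ((∀ᶠ M in (U : Filter ℕ), b + c M ∈ C M) ↔ b + c N ∈ C N) := by
    intro b
    by_cases hb : ∀ᶠ M in (U : Filter ℕ), b + c M ∈ C M
    · filter_upwards [hb] with N hN
      exact ⟨fun _ => hN, fun _ => hb⟩
    · filter_upwards [Ultrafilter.eventually_not.2 hb] with N hN
      exact ⟨fun h => absurd h hb, fun h => absurd h hN⟩
  have h2 : ∀ᶠ N in (U : Filter ℕ), ∀ a ∈ Fintype.piFinset A,
      ((∀ᶠ M in (U : Filter ℕ), (n - ∑ i, u i * a i) + c M ∈ C M) ↔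
        (n - ∑ i, u i * a i) + c N ∈ C N) :=
    (Filter.eventually_all_finset _).2 fun a _ => h1 _
  have h3 : ∀ᶠ N in (U : Filter ℕ), n.natAbs ≤ N := by
    have hle : (U : Filter ℕ) ≤ Filter.atTop := by
      rw [← Nat.cofinite_eq_atTop]
      exact Filter.hyperfilter_le_cofinite
    exact hle (Filter.eventually_ge_atTop _)
  obtain ⟨N, hN2, hN3⟩ := (h2.and h3).exists
  have hLN := hL.id_le (N + 1)
  simp only [id] at hLN
  have hrep := hC N (n + c N) (by
    rw [add_sub_cancel_right, Int.abs_eq_natAbs]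
    exact_mod_cast (by omega))
  rw [← hrep, repFn_one_eq, repFn_one_eq]
  congr 1
  ext a
  simp only [Set.mem_setOf_eq]
  refine and_congr_right fun ha => ?_
  rw [hN2 a (Fintype.mem_piFinset.2 ha)]
  have : n - ∑ i, u i * a i + c N = n + c N - ∑ i, u i * a i := by ring
  rw [this]
end

section
/- Let h ≥ 1 and let φ(x_1,…,x_h,y) = u_1x_1 + ⋯ + u_hx_h + vy be a linear form with nonzero integer coefficients u_1,…,u_h and v ≥ 1, and set ψ(x_1,…,x_h) = u_1x_1 + ⋯ + u_hx_h. Let 𝒜 = (A_1,…,A_h) be an h-tuple of nonempty finite sets of integers, let B be a set of integers, and let t ≥ 1 be an integer such that (𝒜,B) is t-complementing with respect to φ. Let g_min = min(ψ(𝒜)), and let G_min = {(a_1,…,a_h) ∈ A_1 × ⋯ × A_h : ψ(a_1,…,a_h) = g_min}. Then for every integer n, |G_min| · χ_B(n) = t − Σ χ_B([vn + g_min − ψ(a_1,…,a_h)]/v), where the sum is over all (a_1,…,a_h) ∈ A_1 × ⋯ × A_h with (a_1,…,a_h) ∉ G_min, and a summand is counted as 0 whenever v does not divide vn + g_min − ψ(a_1,…,a_h).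 -/
open scoped Classical

/-- The characteristic function of a set `B` of integers. -/
noncomputable def chi (B : Set ℤ) (n : ℤ) : ℤ := if n ∈ B then 1 else 0

theorem repFn_eq_card {h : ℕ} (u : Fin h → ℤ) (v : ℤ) (hv : 1 ≤ v)
    (A : Fin h → Finset ℤ) (B : Set ℤ) (m : ℤ) :
    repFn u v A B m = (((Fintype.piFinset A).filter fun a =>
      v ∣ (m - ∑ i, u i * a i) ∧ (m - ∑ i, u i * a i) / v ∈ B).card : ℕ∞) := by
  have hv0 : v ≠ 0 := by omega
  rw [← Set.encard_coe_eq_coe_finsetCard]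
  have hinj : Function.Injective
      (fun a : Fin h → ℤ => (a, (m - ∑ i, u i * a i) / v)) := by
    intro a b hab
    exact (Prod.ext_iff.mp hab).1
  rw [← hinj.encard_image]
  unfold repFn
  congr 1
  ext ⟨a, b⟩
  simp only [Set.mem_setOf_eq, Set.mem_image, Finset.coe_filter, Fintype.mem_piFinset,
    Prod.mk.injEq]
  constructor
  · rintro ⟨ha, hb, hs⟩
    have e : m - ∑ i, u i * a i = v * b := by linarith
    refine ⟨a, ⟨ha, ?_, ?_⟩, rfl, ?_⟩
    · rw [e]; exact dvd_mul_right v b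
    · rw [e, Int.mul_ediv_cancel_left _ hv0]; exact hb
    · rw [e, Int.mul_ediv_cancel_left _ hv0]
  · rintro ⟨a', ⟨ha, hd, hb⟩, rfl, rfl⟩
    refine ⟨ha, hb, ?_⟩
    rw [Int.mul_ediv_cancel' hd]
    ring

theorem stmt6 {h : ℕ} (hh : 1 ≤ h) (u : Fin h → ℤ) (v : ℤ)
    (hu : ∀ i, u i ≠ 0) (hv : 1 ≤ v)
    (A : Fin h → Finset ℤ) (hA : ∀ i, (A i).Nonempty)
    (B : Set ℤ) (t : ℕ) (ht : 1 ≤ t)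
    (hcomp : ∀ n : ℤ, repFn u v A B n = t)
    (S : Finset ℤ) (hS : S = (Fintype.piFinset A).image fun a => ∑ i, u i * a i)
    (hne : S.Nonempty) (gmin : ℤ) (hgmin : gmin = S.min' hne) :
    ∀ n : ℤ,
      (((Fintype.piFinset A).filter fun a => (∑ i, u i * a i) = gmin).card : ℤ) *
          chi B n =
        (t : ℤ) -
          ∑ a ∈ (Fintype.piFinset A).filter fun a => (∑ i, u i * a i) ≠ gmin,
            if v ∣ (v * n + gmin - ∑ i, u i * a i) then
              chi B ((v * n + gmin - ∑ i, u i * a i) / v)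
            else 0 := by
  intro n
  have hv0 : v ≠ 0 := by omega
  have h1 := hcomp (v * n + gmin)
  rw [repFn_eq_card u v hv, Nat.cast_inj] at h1
  have h2 : (t : ℤ) = ∑ a ∈ Fintype.piFinset A,
      if v ∣ (v * n + gmin - ∑ i, u i * a i) then
        chi B ((v * n + gmin - ∑ i, u i * a i) / v) else 0 := by
    rw [← h1, Finset.card_filter]
    push_cast
    refine Finset.sum_congr rfl fun a _ => ?_
    unfold chi
    split_ifs <;> tauto
  rw [h2, ← Finset.sum_filter_add_sum_filter_not (Fintype.piFinset A)
    (fun a => (∑ i, u i * a i) = gmin), add_sub_assoc]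
  have h3 : ∑ a ∈ (Fintype.piFinset A).filter fun a => (∑ i, u i * a i) = gmin,
      (if v ∣ (v * n + gmin - ∑ i, u i * a i) then
        chi B ((v * n + gmin - ∑ i, u i * a i) / v) else 0) =
      ∑ a ∈ (Fintype.piFinset A).filter fun a => (∑ i, u i * a i) = gmin, chi B n := by
    refine Finset.sum_congr rfl fun a ha => ?_
    rw [(Finset.mem_filter.mp ha).2, add_sub_cancel_right, if_pos (dvd_mul_right v n),
      Int.mul_ediv_cancel_left _ hv0]
  rw [h3, Finset.sum_const, nsmul_eq_mul]
  simp only [ne_eq, sub_self, add_zero]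
end

section
/- Let h ≥ 1 and let φ(x_1,…,x_h,y) = u_1x_1 + ⋯ + u_hx_h + vy be a linear form with nonzero integer coefficients u_1,…,u_h and v ≥ 1, and set ψ(x_1,…,x_h) = u_1x_1 + ⋯ + u_hx_h. Let 𝒜 = (A_1,…,A_h) be an h-tuple of nonempty finite sets of integers, let B be a set of integers, and let t ≥ 1 be an integer such that (𝒜,B) is t-complementing with respect to φ. Let g_max = max(ψ(𝒜)), and let G_max = {(a_1,…,a_h) ∈ A_1 × ⋯ × A_h : ψ(a_1,…,a_h) = g_max}. Then for every integer n, |G_max| · χ_B(n) = t − Σ χ_B(n + [g_max − ψ(a_1,…,a_h)]/v), where the sum is over all (a_1,…,a_h) ∈ A_1 × ⋯ × A_h with (a_1,…,a_h) ∉ G_max, and a summand is counted as 0 whenever v does not divide g_max − ψ(a_1,…,a_h). -/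
open scoped Classical

theorem stmt7 {h : ℕ} (hh : 1 ≤ h) (u : Fin h → ℤ) (v : ℤ)
    (hu : ∀ i, u i ≠ 0) (hv : 1 ≤ v)
    (A : Fin h → Finset ℤ) (hA : ∀ i, (A i).Nonempty)
    (B : Set ℤ) (t : ℕ) (ht : 1 ≤ t)
    (hcomp : ∀ n : ℤ, repFn u v A B n = t)
    (S : Finset ℤ) (hS : S = (Fintype.piFinset A).image fun a => ∑ i, u i * a i)
    (hne : S.Nonempty) (gmax : ℤ) (hgmax : gmax = S.max' hne) :
    ∀ n : ℤ,
      (((Fintype.piFinset A).filter fun a => (∑ i, u i * a i) = gmax).card : ℤ) *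
          chi B n =
        (t : ℤ) -
          ∑ a ∈ (Fintype.piFinset A).filter fun a => (∑ i, u i * a i) ≠ gmax,
            if v ∣ (gmax - ∑ i, u i * a i) then
              chi B (n + (gmax - ∑ i, u i * a i) / v)
            else 0 := by
  intro n
  have key : (t : ℤ) = ∑ a ∈ Fintype.piFinset A,
      if v ∣ (gmax - ∑ i, u i * a i) then
        chi B (n + (gmax - ∑ i, u i * a i) / v) else 0 := by
    have h1 := hcomp (gmax + v * n)
    have h2 : {p : (Fin h → ℤ) × ℤ |
        (∀ i, p.1 i ∈ A i) ∧ p.2 ∈ B ∧ (∑ i, u i * p.1 i) + v * p.2 = gmax + v * n} =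
        Set.image (fun a : Fin h → ℤ => (a, n + (gmax - ∑ i, u i * a i) / v))
          (((Fintype.piFinset A).filter fun a => v ∣ (gmax - ∑ i, u i * a i) ∧
            n + (gmax - ∑ i, u i * a i) / v ∈ B : Finset (Fin h → ℤ)) : Set (Fin h → ℤ)) := by
      ext ⟨a, b⟩
      simp only [Set.mem_ofPred_eq, Set.mem_image, Finset.coe_filter, Fintype.mem_piFinset,
        Prod.mk.injEq]
      constructor
      · rintro ⟨ha, hb, he⟩
        have e1 : gmax - ∑ i, u i * a i = v * (b - n) := by linarith
        have e2 : (gmax - ∑ i, u i * a i) / v = b - n := by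
          rw [e1]; exact Int.mul_ediv_cancel_left _ (by omega)
        have e3 : n + (gmax - ∑ i, u i * a i) / v = b := by rw [e2]; ring
        exact ⟨a, ⟨ha, ⟨_, e1⟩, by rw [e3]; exact hb⟩, rfl, e3⟩
      · rintro ⟨c, ⟨ha, hd, hb⟩, rfl, rfl⟩
        refine ⟨ha, hb, ?_⟩
        have := Int.mul_ediv_cancel' hd
        rw [mul_add, this]; ring
    unfold repFn at h1
    rw [h2, Function.Injective.encard_image (fun a b hab => (Prod.mk.inj hab).1),
      Set.encard_coe_eq_coe_finsetCard] at h1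
    have h3 := Nat.cast_injective (R := ℕ∞) h1
    rw [← h3, Finset.card_filter]
    push_cast
    refine Finset.sum_congr rfl fun a _ => ?_
    unfold chi
    split_ifs <;> simp_all
  rw [key, ← Finset.sum_filter_add_sum_filter_not (Fintype.piFinset A)
    (fun a => (∑ i, u i * a i) = gmax), add_sub_cancel_right,
    Finset.sum_congr rfl (g := fun _ => chi B n)]
  · simp
  · intro a ha
    simp [(Finset.mem_filter.mp ha).2]
end
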